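/- For all reals c > 0, ε > 0 and δ > 0 there exists N such that for all n ≥ N, every bipartite graph G on n vertices containing no subgraph isomorphic to B_2 and having minimum degree at least c·n^{1/2} satisfies e(G) ≤ ( max{ √(4/27 + 2ε), √(1/4 − 4c²ε) } + δ )·n^{3/2}. -/

import Mathlib

open SimpleGraph

/-- `F` is contained in `G` as a subgraph: there is an injective map preserving adjacency. -/
def ContainsCopy {α β : Type*} (F : SimpleGraph α) (G : SimpleGraph β) : Prop :=
  ∃ f : α → β, Function.Injective f ∧ ∀ ⦃a b : α⦄, F.Adj a b → G.Adj (f a) (f b)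

/-- `Bgraph t = K₂ □ S_t`, the Cartesian product of an edge and a star with `t` edges. -/
def Bgraph (t : ℕ) : SimpleGraph (Fin 2 × (Fin 1 ⊕ Fin t)) :=
  (⊤ : SimpleGraph (Fin 2)).boxProd (completeBipartiteGraph (Fin 1) (Fin t))

/-!
Let `s` and `t` be the parts of `G`, with `#s ≤ #t` and `#s + #t ≤ n`. In a triangle-free graph
without `B₂`, any two 4-cycles through a common edge share a further vertex. Consequently, for each
edge `xy`, at most one further neighbour `y'` of `x` has three or more common neighbours with `y`,
and counting cherries with centre in `s` gives, up to lower-order terms, `e² ≤ #s (#t² + p)`, where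
`p` is the number of ordered pairs in `t` with at least two common neighbours; all but `O(e)` of
these pairs have exactly two.

If `p ≤ 2εn²`, then AM-GM finishes the proof with constant `4/27 + 2ε`. Otherwise, let `x` be one
of the two common neighbours of `y, y' ∈ t`. By the minimum degree, `y` has about `c√n` neighbours
that are not neighbours of `y'`, and none of them has a second common neighbour with `x`. This
yields at least `2 (c√n)² p / #s` ordered pairs in `s` with at most one common neighbour, which
improves the count of cherries with centre in `t` to
`e² ≤ 2 #s² #t - 2 (c√n)² p ≤ (1/4 - 4c²ε) n³`.
-/

open Finset

section Local

variable {V : Type*} {G : SimpleGraph V} {x x₁ x₂ y y₁ y₂ z : V}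

/-- The closed walk `x y x' y' x` is a 4-cycle of `G`. Only opposite vertices are required to be
distinct, since adjacent ones are distinct in a simple graph. -/
structure IsFourCycle (G : SimpleGraph V) (x y x' y' : V) : Prop where
  ne_left : x ≠ x'
  ne_right : y ≠ y'
  adj₁ : G.Adj x y
  adj₂ : G.Adj y x'
  adj₃ : G.Adj x' y'
  adj₄ : G.Adj y' x

theorem IsFourCycle.reverse (h : IsFourCycle G x y x₁ y₁) : IsFourCycle G x y₁ x₁ y :=
  ⟨h.ne_left, h.ne_right.symm, h.adj₄.symm, h.adj₃.symm, h.adj₂.symm, h.adj₁.symm⟩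

theorem containsCopy_Bgraph_two (hnodup : [x, x₁, x₂, y, y₁, y₂].Nodup)
    (hxy : G.Adj x y) (hxy₁ : G.Adj x y₁) (hxy₂ : G.Adj x y₂) (hyx₁ : G.Adj y x₁)
    (hyx₂ : G.Adj y x₂) (hxy₁₁ : G.Adj x₁ y₁) (hxy₂₂ : G.Adj x₂ y₂) :
    ContainsCopy (Bgraph 2) G := by
  refine ⟨fun p => ![Sum.elim ![x] ![y₁, y₂], Sum.elim ![y] ![x₁, x₂]] p.1 p.2, ?_, ?_⟩
  · simp only [List.nodup_cons, List.mem_cons, List.not_mem_nil, or_false, not_or] at hnodup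
    simp only [Function.Injective, Prod.forall, Sum.forall, Fin.forall_fin_one, Fin.forall_fin_two,
      Sum.elim_inl, Sum.elim_inr, Matrix.cons_val_zero, Matrix.cons_val_one,
      Matrix.cons_val_fin_one]
    grind
  · simp [Bgraph, Prod.forall, Sum.forall, Fin.forall_fin_two, hxy, hxy₁, hxy₂, hyx₁, hyx₂, hxy₁₁,
      hxy₂₂, hxy.symm, hxy₁.symm, hxy₂.symm, hyx₁.symm, hyx₂.symm, hxy₁₁.symm, hxy₂₂.symm]

theorem not_adj_of_cliqueFree_three (htri : G.CliqueFree 3) (hxy : G.Adj x y)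
    (hyz : G.Adj y z) : ¬ G.Adj x z := by
  classical
  exact fun hxz => htri {x, y, z} <| is3Clique_triple_iff.2 ⟨hxy, hxz, hyz⟩

theorem IsFourCycle.eq_or_eq (htri : G.CliqueFree 3) (hfree : ¬ ContainsCopy (Bgraph 2) G)
    (h₁ : IsFourCycle G x y x₁ y₁) (h₂ : IsFourCycle G x y x₂ y₂) : x₁ = x₂ ∨ y₁ = y₂ := by
  by_contra! hne
  have hx₁y₂ : x₁ ≠ y₂ := by
    rintro rfl
    exact not_adj_of_cliqueFree_three htri h₁.adj₁ h₁.adj₂ h₂.adj₄.symm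
  have hx₂y₁ : x₂ ≠ y₁ := by
    rintro rfl
    exact not_adj_of_cliqueFree_three htri h₂.adj₁ h₂.adj₂ h₁.adj₄.symm
  refine hfree (containsCopy_Bgraph_two ?_ h₁.adj₁ h₁.adj₄.symm h₂.adj₄.symm h₁.adj₂ h₂.adj₂
    h₁.adj₃ h₂.adj₃)
  simp [h₁.ne_left, h₂.ne_left, h₁.ne_right, h₂.ne_right, h₁.adj₁.ne, h₁.adj₂.ne', h₂.adj₂.ne',
    h₁.adj₃.ne, h₂.adj₃.ne, h₁.adj₄.ne', h₂.adj₄.ne', hx₁y₂, hx₂y₁, hne]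

variable [Fintype V] [DecidableEq V] [DecidableRel G.Adj]

variable (G) in
/-- The number of common neighbours of `u` and `v`. -/
def codegree (u v : V) : ℕ := #(G.neighborFinset u ∩ G.neighborFinset v)

variable (G) in
/-- The vertices `y'` such that `x` is one of exactly two common neighbours of `y` and `y'`
(provided that `x` is adjacent to `y`). -/
def mates (x y : V) : Finset V := {y' ∈ G.neighborFinset x | y ≠ y' ∧ codegree G y y' = 2}

theorem exists_isFourCycle (hne : y ≠ y₁) (hxy : G.Adj x y) (hxy₁ : G.Adj x y₁)
    (h : 2 ≤ codegree G y y₁) : ∃ u, IsFourCycle G x y u y₁ := by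
  obtain ⟨u, hu, hux⟩ := exists_mem_notMem_of_card_lt_card (s := {x})
    ((card_singleton x).trans_lt h)
  simp only [mem_inter, mem_neighborFinset] at hu
  exact ⟨u, ⟨(notMem_singleton.1 hux).symm, hne, hxy, hu.1, hu.2.symm, hxy₁.symm⟩⟩

theorem exists_isFourCycle_ne (hne : y ≠ y₁) (hxy : G.Adj x y) (hxy₁ : G.Adj x y₁)
    (h : 3 ≤ codegree G y y₁) (w : V) : ∃ u ≠ w, IsFourCycle G x y u y₁ := by
  obtain ⟨u, hu, huxw⟩ := exists_mem_notMem_of_card_lt_card (s := {x, w})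
    (card_le_two.trans_lt h)
  simp only [mem_insert, mem_singleton, not_or] at huxw
  simp only [mem_inter, mem_neighborFinset] at hu
  exact ⟨u, huxw.2, ⟨Ne.symm huxw.1, hne, hxy, hu.1, hu.2.symm, hxy₁.symm⟩⟩

theorem exists_isFourCycle_of_mem_mates (hxy : G.Adj x y) (h : y₁ ∈ mates G x y) :
    ∃ u, IsFourCycle G x y u y₁ := by
  simp only [mates, mem_filter, mem_neighborFinset] at h
  exact exists_isFourCycle h.2.1 hxy h.1 h.2.2.ge

theorem card_filter_three_le_codegree_le_one (htri : G.CliqueFree 3)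
    (hfree : ¬ ContainsCopy (Bgraph 2) G) (hxy : G.Adj x y) :
    #{y' ∈ G.neighborFinset x | y ≠ y' ∧ 3 ≤ codegree G y y'} ≤ 1 := by
  refine card_le_one.2 fun y₁ h₁ y₂ h₂ => ?_
  simp only [mem_filter, mem_neighborFinset] at h₁ h₂
  obtain ⟨u, hu⟩ := exists_isFourCycle h₁.2.1 hxy h₁.1 (by lia)
  obtain ⟨w, hwu, hw⟩ := exists_isFourCycle_ne h₂.2.1 hxy h₂.1 h₂.2.2 u
  exact (hu.eq_or_eq htri hfree hw).resolve_left hwu.symm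

theorem eq_of_mem_mates_of_adj (htri : G.CliqueFree 3) (hfree : ¬ ContainsCopy (Bgraph 2) G)
    (hxy : G.Adj x y) (h₁ : y₁ ∈ mates G x y) (h₂ : y₂ ∈ mates G x y) (hz₁ : G.Adj y₁ z)
    (hz₂ : G.Adj y₂ z) (hz : ¬ G.Adj y z) : y₁ = y₂ := by
  by_contra hne
  obtain ⟨u, hu⟩ := exists_isFourCycle_of_mem_mates hxy h₁
  simp only [mates, mem_filter, mem_neighborFinset] at h₂
  have hxz : x ≠ z := by
    rintro rfl
    exact hz hxy.symm
  have hcycle : IsFourCycle G x y₁ z y₂ := ⟨hxz, hne, hu.adj₄.symm, hz₁, hz₂.symm, h₂.1.symm⟩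
  rcases hu.reverse.eq_or_eq htri hfree hcycle with rfl | hy
  · exact hz hu.adj₂
  · exact h₂.2.1 hy

theorem codegree_le_one_of_mem_mates (htri : G.CliqueFree 3)
    (hfree : ¬ ContainsCopy (Bgraph 2) G) (hxy : G.Adj x y) (h₁ : y₁ ∈ mates G x y)
    (hyz : G.Adj y z) (hz : ¬ G.Adj y₁ z) : codegree G x z ≤ 1 := by
  by_contra! hcodeg
  obtain ⟨u, hu⟩ := exists_isFourCycle_of_mem_mates hxy h₁
  have hxz : x ≠ z := by
    rintro rfl
    exact hz hu.adj₄
  obtain ⟨w, hw⟩ := exists_isFourCycle hxz hxy.symm hyz hcodeg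
  have hcycle : IsFourCycle G x y z w :=
    ⟨hxz, hw.ne_left, hxy, hyz, hw.adj₃.symm, hw.adj₂.symm⟩
  rcases hu.eq_or_eq htri hfree hcycle with rfl | rfl
  · exact hz hu.adj₃.symm
  · exact hz hw.adj₃

theorem sub_two_le_card_sdiff {d : ℕ} (hd : d ≤ G.degree y) (h : codegree G y₁ y = 2) :
    d - 2 ≤ #(G.neighborFinset y \ G.neighborFinset y₁) := by
  rw [card_sdiff, card_neighborFinset_eq_degree]
  exact tsub_le_tsub hd h.le

end Local

theorem isBipartiteWith_cliqueFree_three {V : Type*} {G : SimpleGraph V} {s t : Set V}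
    (hG : G.IsBipartiteWith s t) : G.CliqueFree 3 :=
  hG.isBipartite.cliqueFree (by simp)

section DoubleCounting

variable {V : Type*} [DecidableEq V]

theorem card_filter_offDiag (s : Finset V) (P : V → V → Prop) [DecidableRel P] :
    #{q ∈ s.offDiag | P q.1 q.2} = ∑ x ∈ s, #{y ∈ s | x ≠ y ∧ P x y} := by
  have hprod : {q ∈ s.offDiag | P q.1 q.2} = {q ∈ s ×ˢ s | q.1 ≠ q.2 ∧ P q.1 q.2} := by
    ext
    simp [and_assoc]
  rw [hprod]
  simp only [card_filter, sum_product]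

variable [Fintype V] {G : SimpleGraph V} [DecidableRel G.Adj] {s t : Finset V} {x y : V} {d : ℕ}

theorem sum_card_filter_offDiag_neighborFinset (hG : G.IsBipartiteWith s t) (P : V → V → Prop)
    [DecidableRel P] :
    ∑ x ∈ s, #{q ∈ (G.neighborFinset x).offDiag | P q.1 q.2} =
      ∑ q ∈ t.offDiag with P q.1 q.2, codegree G q.1 q.2 := by
  convert sum_card_bipartiteAbove_eq_sum_card_bipartiteBelow (s := s)
    (t := {q ∈ t.offDiag | P q.1 q.2}) (fun x q => G.Adj x q.1 ∧ G.Adj x q.2) using 2 with x hx q hq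
  · congr 1
    ext q
    have hadj : ∀ y, G.Adj x y → y ∈ t := fun y => hG.mem_of_mem_adj hx
    simp only [mem_filter, mem_offDiag, mem_neighborFinset, mem_bipartiteAbove]
    grind
  · rw [codegree]
    congr 1
    ext x
    have hq₁ : q.1 ∈ t := (mem_offDiag.1 (mem_filter.1 hq).1).1
    have hadj : G.Adj x q.1 → x ∈ s := hG.mem_of_mem_adj' hq₁
    simp only [mem_inter, mem_neighborFinset, mem_bipartiteBelow, G.adj_comm x]
    grind [G.adj_comm x q.1]

theorem sum_codegree_offDiag (hG : G.IsBipartiteWith s t) :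
    ∑ q ∈ t.offDiag, codegree G q.1 q.2 + #G.edgeFinset = ∑ x ∈ s, G.degree x ^ 2 := by
  have hcount := sum_card_filter_offDiag_neighborFinset hG fun _ _ => True
  simp only [filter_true, offDiag_card, card_neighborFinset_eq_degree] at hcount
  rw [← hcount, ← isBipartiteWith_sum_degrees_eq_card_edges hG, ← sum_add_distrib]
  refine sum_congr rfl fun x _ => ?_
  rw [Nat.sub_add_cancel (Nat.le_mul_self _), sq]

theorem sum_codegree_three_le (hG : G.IsBipartiteWith s t)
    (hfree : ¬ ContainsCopy (Bgraph 2) G) :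
    ∑ q ∈ t.offDiag with 3 ≤ codegree G q.1 q.2, codegree G q.1 q.2 ≤ #G.edgeFinset := by
  rw [← sum_card_filter_offDiag_neighborFinset hG (3 ≤ codegree G · ·),
    ← isBipartiteWith_sum_degrees_eq_card_edges hG]
  refine sum_le_sum fun x _ => ?_
  rw [card_filter_offDiag _ (3 ≤ codegree G · ·), ← card_neighborFinset_eq_degree, card_eq_sum_ones]
  exact sum_le_sum fun y hy => card_filter_three_le_codegree_le_one
    (isBipartiteWith_cliqueFree_three hG) hfree ((mem_neighborFinset ..).1 hy)

theorem card_codegree_two_le (hG : G.IsBipartiteWith s t) (hfree : ¬ ContainsCopy (Bgraph 2) G) :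
    #{q ∈ t.offDiag | 2 ≤ codegree G q.1 q.2} ≤
      #{q ∈ t.offDiag | codegree G q.1 q.2 = 2} + #G.edgeFinset := by
  grw [← sum_codegree_three_le hG hfree]
  simp only [card_filter, sum_filter, ← sum_add_distrib]
  refine sum_le_sum fun q _ => ?_
  split_ifs <;> lia

theorem sum_codegree_offDiag_le (hG : G.IsBipartiteWith s t)
    (hfree : ¬ ContainsCopy (Bgraph 2) G) :
    ∑ q ∈ t.offDiag, codegree G q.1 q.2 ≤
      #t ^ 2 + #{q ∈ t.offDiag | 2 ≤ codegree G q.1 q.2} + #G.edgeFinset := by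
  have hcard : #t.offDiag ≤ #t ^ 2 := by
    rw [offDiag_card, sq]
    exact Nat.sub_le _ _
  grw [← sum_codegree_three_le hG hfree, ← hcard]
  simp only [card_eq_sum_ones t.offDiag, card_filter, sum_filter, ← sum_add_distrib]
  refine sum_le_sum fun q _ => ?_
  split_ifs <;> lia

theorem sq_card_edgeFinset_le (hG : G.IsBipartiteWith s t)
    (hfree : ¬ ContainsCopy (Bgraph 2) G) :
    #G.edgeFinset ^ 2 ≤
      #s * (#t ^ 2 + #{q ∈ t.offDiag | 2 ≤ codegree G q.1 q.2} + 2 * #G.edgeFinset) := by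
  calc #G.edgeFinset ^ 2 = (∑ x ∈ s, G.degree x) ^ 2 := by
        rw [isBipartiteWith_sum_degrees_eq_card_edges hG]
    _ ≤ #s * ∑ x ∈ s, G.degree x ^ 2 := sq_sum_le_card_mul_sum_sq
    _ = #s * (∑ q ∈ t.offDiag, codegree G q.1 q.2 + #G.edgeFinset) := by
        rw [sum_codegree_offDiag hG]
    _ ≤ _ := by
        grw [sum_codegree_offDiag_le hG hfree, add_assoc, ← two_mul]

theorem card_mates_mul_le (hG : G.IsBipartiteWith s t) (hfree : ¬ ContainsCopy (Bgraph 2) G)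
    (hdeg : ∀ v ∈ t, d ≤ G.degree v) (hx : x ∈ s) (hxy : G.Adj x y) :
    #(mates G x y) * (d - 2) ≤ #s := by
  rw [← mul_one #s]
  refine card_mul_le_card_mul (fun y' z => z ∈ G.neighborFinset y' \ G.neighborFinset y)
    (fun y' hy' => ?_) fun z _ => card_le_one.2 fun y₁ h₁ y₂ h₂ => ?_
  · have hmem := mem_filter.1 hy'
    have hy't := isBipartiteWith_neighborFinset_subset hG hx hmem.1
    refine (sub_two_le_card_sdiff (hdeg y' hy't) hmem.2.2).trans (card_le_card fun z hz => ?_)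
    exact (mem_bipartiteAbove _).2
      ⟨isBipartiteWith_neighborFinset_subset' hG hy't (mem_sdiff.1 hz).1, hz⟩
  · simp only [mem_bipartiteBelow, mem_sdiff, mem_neighborFinset] at h₁ h₂
    exact eq_of_mem_mates_of_adj (isBipartiteWith_cliqueFree_three hG) hfree hxy h₁.1 h₂.1
      h₁.2.1 h₂.2.1 h₁.2.2

theorem card_mates_nonempty_mul_le (hG : G.IsBipartiteWith s t)
    (hfree : ¬ ContainsCopy (Bgraph 2) G) (hdeg : ∀ v ∈ t, d ≤ G.degree v) (hx : x ∈ s) :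
    #{y ∈ G.neighborFinset x | (mates G x y).Nonempty} * (d - 2) ≤
      #{z ∈ s | x ≠ z ∧ codegree G x z ≤ 1} := by
  rw [← mul_one #{z ∈ s | x ≠ z ∧ codegree G x z ≤ 1}]
  refine card_mul_le_card_mul (fun y z => G.Adj y z) (fun y hy => ?_)
    fun z hz => card_le_one.2 fun y₁ h₁ y₂ h₂ => ?_
  · obtain ⟨hxy, y', hy'⟩ := mem_filter.1 hy
    have hyt := isBipartiteWith_neighborFinset_subset hG hx hxy
    have hmem := mem_filter.1 hy'
    have hcodeg : codegree G y' y = 2 := by rw [codegree, inter_comm]; exact hmem.2.2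
    refine (sub_two_le_card_sdiff (hdeg y hyt) hcodeg).trans (card_le_card fun z hz => ?_)
    simp only [mem_sdiff, mem_neighborFinset] at hz hmem hxy
    simp only [mem_bipartiteAbove, mem_filter]
    refine ⟨⟨hG.mem_of_mem_adj' hyt hz.1.symm, ?_, ?_⟩, hz.1⟩
    · rintro rfl
      exact hz.2 hmem.1.symm
    · exact codegree_le_one_of_mem_mates (isBipartiteWith_cliqueFree_three hG) hfree hxy hy'
        hz.1 hz.2
  · simp only [mem_bipartiteBelow, mem_filter] at h₁ h₂ hz
    exact card_le_one.1 hz.2.2 y₁ (mem_inter.2 ⟨h₁.1.1, by simpa using h₁.2.symm⟩)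
      y₂ (mem_inter.2 ⟨h₂.1.1, by simpa using h₂.2.symm⟩)

theorem sum_card_mates_mul_sq_le (hG : G.IsBipartiteWith s t)
    (hfree : ¬ ContainsCopy (Bgraph 2) G) (hdeg : ∀ v ∈ t, d ≤ G.degree v) (hx : x ∈ s) :
    (∑ y ∈ G.neighborFinset x, #(mates G x y)) * (d - 2) ^ 2 ≤
      #s * #{z ∈ s | x ≠ z ∧ codegree G x z ≤ 1} := by
  have hsupp : ∑ y ∈ G.neighborFinset x, #(mates G x y) =
      ∑ y ∈ G.neighborFinset x with (mates G x y).Nonempty, #(mates G x y) :=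
    (sum_filter_of_ne fun y _ hy => card_ne_zero.1 hy).symm
  calc (∑ y ∈ G.neighborFinset x, #(mates G x y)) * (d - 2) ^ 2
      = (∑ y ∈ G.neighborFinset x with (mates G x y).Nonempty, #(mates G x y) * (d - 2)) *
          (d - 2) := by rw [hsupp, sq, ← mul_assoc, sum_mul]
    _ ≤ (#{y ∈ G.neighborFinset x | (mates G x y).Nonempty} * #s) * (d - 2) := by
        refine Nat.mul_le_mul_right _ (sum_le_card_nsmul _ _ _ fun y hy => ?_)
        exact card_mates_mul_le hG hfree hdeg hx <| by simpa using (mem_filter.1 hy).1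
    _ = #s * (#{y ∈ G.neighborFinset x | (mates G x y).Nonempty} * (d - 2)) := by ring
    _ ≤ _ := Nat.mul_le_mul_left _ (card_mates_nonempty_mul_le hG hfree hdeg hx)

theorem sq_mul_card_codegree_eq_two_le (hG : G.IsBipartiteWith s t)
    (hfree : ¬ ContainsCopy (Bgraph 2) G) (hdeg : ∀ v ∈ t, d ≤ G.degree v) :
    2 * #{q ∈ t.offDiag | codegree G q.1 q.2 = 2} * (d - 2) ^ 2 ≤
      #s * #{q ∈ s.offDiag | codegree G q.1 q.2 ≤ 1} := by
  have hsum : ∑ q ∈ t.offDiag with codegree G q.1 q.2 = 2, codegree G q.1 q.2 =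
      2 * #{q ∈ t.offDiag | codegree G q.1 q.2 = 2} := by
    rw [mul_comm, ← smul_eq_mul]
    exact sum_eq_card_nsmul fun q hq => (mem_filter.1 hq).2
  rw [← hsum, ← sum_card_filter_offDiag_neighborFinset hG (codegree G · · = 2),
    card_filter_offDiag s (codegree G · · ≤ 1), sum_mul, mul_sum]
  simp only [card_filter_offDiag _ (codegree G · · = 2)]
  exact sum_le_sum fun x hx => sum_card_mates_mul_sq_le hG hfree hdeg hx

theorem card_filter_offDiag_add_card_filter_offDiag_le (s : Finset V) :
    #{q ∈ s.offDiag | 2 ≤ codegree G q.1 q.2} + #{q ∈ s.offDiag | codegree G q.1 q.2 ≤ 1} ≤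
      #s ^ 2 := by
  have hcompl : {q ∈ s.offDiag | codegree G q.1 q.2 ≤ 1} =
      {q ∈ s.offDiag | ¬ 2 ≤ codegree G q.1 q.2} := by
    simp only [not_le, Nat.lt_succ_iff]
  rw [hcompl, card_filter_add_card_filter_not, offDiag_card, sq]
  exact Nat.sub_le _ _

end DoubleCounting

section RealBounds

variable {a b n m δ η L E : ℝ}

theorem mul_sq_le_of_add_le (ha : 0 ≤ a) (hb : 0 ≤ b) (hab : a + b ≤ n) :
    a * b ^ 2 ≤ 4 / 27 * n ^ 3 := by
  have hamgm : a * b ^ 2 ≤ 4 / 27 * (a + b) ^ 3 := by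
    nlinarith [mul_nonneg ha (sq_nonneg (2 * a - b)), mul_nonneg hb (sq_nonneg (2 * a - b))]
  grw [hamgm, hab]

theorem mul_sq_le_of_le_of_add_le (ha : 0 ≤ a) (hle : a ≤ b) (hab : a + b ≤ n) :
    b * a ^ 2 ≤ n ^ 3 / 8 := by
  have hprod : a * b ≤ n ^ 2 / 4 := by nlinarith [sq_nonneg (a - b)]
  calc b * a ^ 2 = a * b * a := by ring
    _ ≤ n ^ 2 / 4 * (n / 2) :=
        mul_le_mul hprod (by linarith) ha (by positivity)
    _ = n ^ 3 / 8 := by ring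

theorem le_add_mul_of_sq_le (hm : 0 ≤ m) (hδ : 0 < δ) (hL : 0 ≤ L) (hη : η * (1 + δ) ≤ δ ^ 2)
    (h : E ^ 2 ≤ (m * L) ^ 2 + η * L * (L + E)) : E ≤ (m + δ) * L := by
  by_contra! hE
  have hmL : 0 ≤ m * L := by positivity
  have hδL : 0 ≤ δ * L := by positivity
  have hgap : δ * L < E - m * L := by linarith
  have hE₀ : 0 < E := by linarith
  have herror : η * L * (L + E) ≤ δ * L * E := by
    refine le_of_mul_le_mul_right ?_ (by positivity : 0 < 1 + δ)
    calc η * L * (L + E) * (1 + δ) = η * (1 + δ) * (L * (L + E)) := by ring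
      _ ≤ δ ^ 2 * (L * (L + E)) := by gcongr
      _ = δ * L * (δ * L + δ * E) := by ring
      _ ≤ δ * L * (E + δ * E) := by gcongr; linarith
      _ = δ * L * E * (1 + δ) := by ring
  nlinarith [mul_lt_mul_of_pos_right hgap hE₀, mul_nonneg hmL (hδL.trans hgap.le)]

theorem cast_floor_sub_two_sq_le (ha : 0 ≤ a) : ((⌊a⌋₊ - 2 : ℕ) : ℝ) ^ 2 ≤ a ^ 2 := by
  grw [Nat.sub_le, Nat.floor_le ha]

theorem sq_sub_le_cast_floor_sub_two_sq (ha : 0 ≤ a) :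
    a ^ 2 - 6 * a ≤ ((⌊a⌋₊ - 2 : ℕ) : ℝ) ^ 2 := by
  have htrunc : (⌊a⌋₊ : ℝ) ≤ (⌊a⌋₊ - 2 : ℕ) + 2 := by exact_mod_cast le_tsub_add
  have hfloor : a - 3 ≤ (⌊a⌋₊ - 2 : ℕ) := by linarith [Nat.lt_floor_add_one a]
  rcases le_total a 3 with hle | hle
  · nlinarith [sq_nonneg ((⌊a⌋₊ - 2 : ℕ) : ℝ)]
  · nlinarith [pow_le_pow_left₀ (sub_nonneg.2 hle) hfloor 2]

end RealBounds

section EdgeBounds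

variable {V : Type*} [Fintype V] [DecidableEq V] {G : SimpleGraph V} [DecidableRel G.Adj]
  {s t : Finset V} {n : ℝ}

theorem sq_card_edgeFinset_le_of_card_codegree_le {η : ℝ} (hG : G.IsBipartiteWith s t)
    (hfree : ¬ ContainsCopy (Bgraph 2) G) (hn : #s + #t ≤ n)
    (hpairs : #{q ∈ t.offDiag | 2 ≤ codegree G q.1 q.2} ≤ η * n ^ 2) :
    (#G.edgeFinset : ℝ) ^ 2 ≤ (4 / 27 + η) * n ^ 3 + 2 * n * #G.edgeFinset := by
  have hs : (#s : ℝ) ≤ n := by linarith [(#t).cast_nonneg (α := ℝ)]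
  have hn₀ : 0 ≤ n := (#s).cast_nonneg.trans hs
  have hcount : (#G.edgeFinset : ℝ) ^ 2 ≤ #s *
      (#t ^ 2 + #{q ∈ t.offDiag | 2 ≤ codegree G q.1 q.2} + 2 * #G.edgeFinset) := by
    exact_mod_cast sq_card_edgeFinset_le hG hfree
  set p := ((#{q ∈ t.offDiag | 2 ≤ codegree G q.1 q.2} : ℕ) : ℝ)
  calc (#G.edgeFinset : ℝ) ^ 2 ≤ #s * (#t ^ 2 + p + 2 * #G.edgeFinset) := hcount
    _ = #s * #t ^ 2 + #s * (p + 2 * #G.edgeFinset) := by ring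
    _ ≤ 4 / 27 * n ^ 3 + n * (η * n ^ 2 + 2 * #G.edgeFinset) := by
        grw [mul_sq_le_of_add_le (by positivity) (by positivity) hn, hs, hpairs]
    _ = _ := by ring

theorem sq_card_edgeFinset_le_of_le_degree {d : ℕ} (hG : G.IsBipartiteWith s t)
    (hfree : ¬ ContainsCopy (Bgraph 2) G) (hle : #s ≤ #t) (hn : #s + #t ≤ n)
    (hdeg : ∀ v ∈ t, d ≤ G.degree v) :
    (#G.edgeFinset : ℝ) ^ 2 ≤ n ^ 3 / 4
      - 2 * (d - 2 : ℕ) ^ 2 * (#{q ∈ t.offDiag | 2 ≤ codegree G q.1 q.2} - #G.edgeFinset)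
      + 2 * n * #G.edgeFinset := by
  have ht : (#t : ℝ) ≤ n := by linarith [(#s).cast_nonneg (α := ℝ)]
  have hst : (#s : ℝ) ≤ #t := by exact_mod_cast hle
  have hcount : (#G.edgeFinset : ℝ) ^ 2 ≤ #t *
      (#s ^ 2 + #{q ∈ s.offDiag | 2 ≤ codegree G q.1 q.2} + 2 * #G.edgeFinset) := by
    exact_mod_cast sq_card_edgeFinset_le hG.symm hfree
  have hexact : (#{q ∈ t.offDiag | 2 ≤ codegree G q.1 q.2} : ℝ) ≤
      #{q ∈ t.offDiag | codegree G q.1 q.2 = 2} + #G.edgeFinset := by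
    exact_mod_cast card_codegree_two_le hG hfree
  have hsplit : (#{q ∈ s.offDiag | 2 ≤ codegree G q.1 q.2} : ℝ) +
      #{q ∈ s.offDiag | codegree G q.1 q.2 ≤ 1} ≤ #s ^ 2 := by
    exact_mod_cast card_filter_offDiag_add_card_filter_offDiag_le s
  have hgain : 2 * (#{q ∈ t.offDiag | codegree G q.1 q.2 = 2} : ℝ) * (d - 2 : ℕ) ^ 2 ≤
      #s * #{q ∈ s.offDiag | codegree G q.1 q.2 ≤ 1} := by
    exact_mod_cast sq_mul_card_codegree_eq_two_le hG hfree hdeg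
  set p := ((#{q ∈ t.offDiag | 2 ≤ codegree G q.1 q.2} : ℕ) : ℝ)
  set p₂ := ((#{q ∈ t.offDiag | codegree G q.1 q.2 = 2} : ℕ) : ℝ)
  set r := ((#{q ∈ s.offDiag | 2 ≤ codegree G q.1 q.2} : ℕ) : ℝ)
  set l := ((#{q ∈ s.offDiag | codegree G q.1 q.2 ≤ 1} : ℕ) : ℝ)
  calc (#G.edgeFinset : ℝ) ^ 2 ≤ #t * (#s ^ 2 + r + 2 * #G.edgeFinset) := hcount
    _ ≤ #t * (#s ^ 2 + (#s ^ 2 - l) + 2 * #G.edgeFinset) := by gcongr; linarith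
    _ = 2 * (#t * #s ^ 2) - #t * l + 2 * #t * #G.edgeFinset := by ring
    _ ≤ 2 * (n ^ 3 / 8) - #s * l + 2 * n * #G.edgeFinset := by
        gcongr
        exact mul_sq_le_of_le_of_add_le (by positivity) hst hn
    _ ≤ 2 * (n ^ 3 / 8) - 2 * (p - #G.edgeFinset) * (d - 2 : ℕ) ^ 2
          + 2 * n * #G.edgeFinset := by
        grw [← hgain]
        gcongr
        linarith
    _ = _ := by ring

omit [DecidableEq V] in
theorem sq_card_edgeFinset_le_max {c ε : ℝ} (hc : 0 ≤ c) (hε : 0 ≤ ε)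
    (hG : G.IsBipartiteWith s t) (hfree : ¬ ContainsCopy (Bgraph 2) G) (hle : #s ≤ #t)
    (hn : #s + #t ≤ n) (hdeg : ∀ v ∈ t, c * √n ≤ G.degree v) :
    (#G.edgeFinset : ℝ) ^ 2 ≤ max (4 / 27 + 2 * ε) (1 / 4 - 4 * c ^ 2 * ε) * n ^ 3
      + (24 * c * ε + 2 * c ^ 2 + 2) * n * (n * √n + #G.edgeFinset) := by
  classical
  have hn₀ : 0 ≤ n := le_trans (by positivity) hn
  have hsqrt : √n ^ 2 = n := Real.sq_sqrt hn₀
  set p := ((#{q ∈ t.offDiag | 2 ≤ codegree G q.1 q.2} : ℕ) : ℝ) with hp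
  rcases le_total p (2 * ε * n ^ 2) with hsparse | hdense
  · have hpos : 0 ≤ (24 * c * ε + 2 * c ^ 2) * n * (n * √n + #G.edgeFinset) + 2 * n * (n * √n) := by
      positivity
    have hmax := mul_le_mul_of_nonneg_right
      (le_max_left (4 / 27 + 2 * ε) (1 / 4 - 4 * c ^ 2 * ε)) (pow_nonneg hn₀ 3)
    linarith [sq_card_edgeFinset_le_of_card_codegree_le hG hfree hn hsparse]
  · have hcn : 0 ≤ c * √n := by positivity
    have hfloor : ∀ v ∈ t, ⌊c * √n⌋₊ ≤ G.degree v := fun v hv => Nat.floor_le_of_le (hdeg v hv)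
    have hbound := sq_card_edgeFinset_le_of_le_degree hG hfree hle hn hfloor
    have hupper := cast_floor_sub_two_sq_le hcn
    have hlower := sq_sub_le_cast_floor_sub_two_sq hcn
    rw [← hp] at hbound
    set k := ((⌊c * √n⌋₊ - 2 : ℕ) : ℝ)
    have hmax := mul_le_mul_of_nonneg_right
      (le_max_right (4 / 27 + 2 * ε) (1 / 4 - 4 * c ^ 2 * ε)) (pow_nonneg hn₀ 3)
    rw [mul_pow, hsqrt] at hupper hlower
    have hgain : (c ^ 2 * n - 6 * (c * √n)) * (4 * ε * n ^ 2) ≤ k ^ 2 * (2 * p) := by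
      grw [hlower]
      exact mul_le_mul_of_nonneg_left (by linarith) (sq_nonneg k)
    have hloss : k ^ 2 * #G.edgeFinset ≤ c ^ 2 * n * #G.edgeFinset := by gcongr
    have hpos : 0 ≤ (2 * c ^ 2 + 2) * n * (n * √n) + 24 * c * ε * n * #G.edgeFinset := by positivity
    linarith

end EdgeBounds

theorem exists_isBipartiteWith_card_le {V : Type*} [Finite V] {G : SimpleGraph V}
    (hG : G.Colorable 2) : ∃ s t : Finset V, G.IsBipartiteWith s t ∧ #s ≤ #t := by
  classical
  have := Fintype.ofFinite V
  obtain ⟨s, t, hst⟩ := IsBipartite.exists_isBipartiteWith hG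
  rw [← s.coe_toFinset, ← t.coe_toFinset] at hst
  rcases le_total #s.toFinset #t.toFinset with h | h
  · exact ⟨_, _, hst, h⟩
  · exact ⟨_, _, hst.symm, h⟩

theorem eventually_div_sqrt_mul_le (C : ℝ) {δ : ℝ} (hδ : 0 < δ) :
    ∀ᶠ n : ℕ in Filter.atTop, C / √n * (1 + δ) ≤ δ ^ 2 := by
  have hsqrt : Filter.Tendsto (fun n : ℕ => √(n : ℝ)) Filter.atTop Filter.atTop :=
    Real.tendsto_sqrt_atTop.comp tendsto_natCast_atTop_atTop
  have hlim := (hsqrt.const_div_atTop C).mul_const (1 + δ)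
  rw [zero_mul] at hlim
  exact hlim.eventually_le_const (by positivity)

theorem le_sqrt_add_mul_rpow_of_sq_le {M C δ E : ℝ} {n : ℕ} (hM : 0 ≤ M) (hδ : 0 < δ)
    (hn : C / √n * (1 + δ) ≤ δ ^ 2) (h : E ^ 2 ≤ M * n ^ 3 + C * n * (n * √n + E)) :
    E ≤ (√M + δ) * (n : ℝ) ^ (3 / 2 : ℝ) := by
  have hsqrt : √(n : ℝ) ^ 2 = n := Real.sq_sqrt n.cast_nonneg
  have hrpow : (n : ℝ) ^ (3 / 2 : ℝ) = n * √n := by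
    rw [show (3 / 2 : ℝ) = 1 + 1 / 2 by norm_num, Real.rpow_add_of_nonneg n.cast_nonneg zero_le_one
      (by norm_num), Real.rpow_one, Real.sqrt_eq_rpow]
  have hcoeff : C / √n * (n * √n) = C * n := by
    rcases n.eq_zero_or_pos with rfl | hpos
    · simp
    · field_simp
  rw [hrpow]
  refine le_add_mul_of_sq_le (Real.sqrt_nonneg M) hδ (by positivity) hn ?_
  rwa [hcoeff, mul_pow, mul_pow, Real.sq_sqrt hM, hsqrt, ← pow_succ]

theorem bip_B2_min_degree_upper_general (c ε δ : ℝ) (hc : 0 ≤ c) (hε : 0 ≤ ε) (hδ : 0 < δ) :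
    ∃ N : ℕ, ∀ n : ℕ, N ≤ n → ∀ (V : Type*) [Fintype V], Fintype.card V = n →
      ∀ (G : SimpleGraph V) (s t : Finset V), G.IsBipartiteWith s t → #s ≤ #t →
      ¬ ContainsCopy (Bgraph 2) G →
      (∀ v ∈ t, c * (n : ℝ) ^ (1 / 2 : ℝ) ≤ ((G.neighborSet v).ncard : ℝ)) →
      (G.edgeSet.ncard : ℝ)
        ≤ (max (√(4 / 27 + 2 * ε)) (√(1 / 4 - 4 * c ^ 2 * ε)) + δ) * (n : ℝ) ^ (3 / 2 : ℝ) := by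
  obtain ⟨N, hN⟩ := Filter.eventually_atTop.1
    (eventually_div_sqrt_mul_le (24 * c * ε + 2 * c ^ 2 + 2) hδ)
  refine ⟨N, fun n hn V _ hV G s t hG hle hfree hdeg => ?_⟩
  classical
  have hcard : (#s + #t : ℝ) ≤ n := by
    rw [← hV, ← Nat.cast_add, ← card_union_of_disjoint (by exact_mod_cast hG.disjoint)]
    exact_mod_cast card_le_univ _
  have hdegree : ∀ v ∈ t, c * √(n : ℝ) ≤ G.degree v := fun v hv => by
    rw [Real.sqrt_eq_rpow, ← card_neighborFinset_eq_degree, neighborFinset,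
      ← Set.ncard_eq_toFinset_card']
    exact hdeg v hv
  rw [← Real.sqrt_monotone.map_max, Set.ncard_eq_toFinset_card', ← edgeFinset]
  exact le_sqrt_add_mul_rpow_of_sq_le (le_max_of_le_left (by positivity)) hδ (hN n hn)
    (sq_card_edgeFinset_le_max hc hε hG hfree hle hcard hdegree)

theorem bip_B2_min_degree_upper (c ε δ : ℝ) (hc : 0 < c) (hε : 0 < ε) (hδ : 0 < δ) :
    ∃ N : ℕ, ∀ n : ℕ, N ≤ n → ∀ G : SimpleGraph (Fin n), G.Colorable 2 →
      ¬ ContainsCopy (Bgraph 2) G →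
      (∀ v : Fin n, c * (n : ℝ) ^ (1/2 : ℝ) ≤ ((G.neighborSet v).ncard : ℝ)) →
      (G.edgeSet.ncard : ℝ)
        ≤ (max (Real.sqrt (4 / 27 + 2 * ε)) (Real.sqrt (1 / 4 - 4 * c ^ 2 * ε)) + δ)
            * (n : ℝ) ^ (3/2 : ℝ) := by
  obtain ⟨N, hN⟩ := bip_B2_min_degree_upper_general c ε δ hc.le hε.le hδ
  refine ⟨N, fun n hn G hG hfree hdeg => ?_⟩
  obtain ⟨s, t, hst, hle⟩ := exists_isBipartiteWith_card_le hG
  exact hN n hn (Fin n) (Fintype.card_fin n) G s t hst hle hfree fun v _ => hdeg v
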